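/- Let d ≥ 1, L > 0, λ > 0, and let h : ℝ^d → ℝ be defined as in the context. Define f(x) = (Lλ²/152)·h(x/λ). Then: (1) f has L-Lipschitz gradient; (2) f(0) − inf_{x∈ℝ^d} f(x) ≤ 12·Lλ²d/152; and (3) ‖∇f(x)‖ ≥ Lλ/152 for every x ∈ ℝ^d with x_d = 0. -/

import Mathlib

set_option autoImplicit false
set_option maxHeartbeats 1000000

open MeasureTheory

noncomputable section

/-- The bump `ψ` from Arjevani et al. -/
def ψfun (z : ℝ) : ℝ := if z ≤ 1 / 2 then 0 else Real.exp (1 - 1 / (2 * z - 1) ^ 2)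

/-- The soft step `φ(z) = √e ∫_{-∞}^z e^{-t²/2} dt`. -/
def φfun (z : ℝ) : ℝ := Real.sqrt (Real.exp 1) * ∫ t in Set.Iic z, Real.exp (-t ^ 2 / 2)

/-- The hard zero-chain function `h` on `ℝ^{d+1}` (coordinates are 0-based: the paper's
`x_j` is `x ⟨j-1⟩`). -/
def hardFun {d : ℕ} (x : EuclideanSpace ℝ (Fin (d + 1))) : ℝ :=
  -(ψfun 1) * φfun (x 0) +
    ∑ j : Fin d,
      (ψfun (-(x j.castSucc)) * φfun (-(x j.succ)) - ψfun (x j.castSucc) * φfun (x j.succ))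

/-- `h₁`: the part of `h` with pairs `(x_j, x_{j+1})` for (1-based) even `j`,
doubled, together with the doubled first term. -/
def hardFun1 {d : ℕ} (x : EuclideanSpace ℝ (Fin (d + 1))) : ℝ :=
  -2 * ψfun 1 * φfun (x 0) +
    2 * ∑ j : Fin d, if Even ((j : ℕ) + 1) then
      ψfun (-(x j.castSucc)) * φfun (-(x j.succ)) - ψfun (x j.castSucc) * φfun (x j.succ)
    else 0

/-- `h₂`: the doubled part of `h` with pairs `(x_j, x_{j+1})` for (1-based) odd `j`. -/
def hardFun2 {d : ℕ} (x : EuclideanSpace ℝ (Fin (d + 1))) : ℝ :=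
  2 * ∑ j : Fin d, if Odd ((j : ℕ) + 1) then
      ψfun (-(x j.castSucc)) * φfun (-(x j.succ)) - ψfun (x j.castSucc) * φfun (x j.succ)
    else 0

/-- `prog x`: `0` if `x = 0`, otherwise the largest (1-based) index of a nonzero
coordinate of `x`. -/
def progVec {m : ℕ} (x : EuclideanSpace ℝ (Fin m)) : ℕ :=
  sSup {k | ∃ j : Fin m, x j ≠ 0 ∧ k = (j : ℕ) + 1}

/-! ### Calculus facts about `ψ` -/

/-- derivative of `ψ` -/
def psiD (z : ℝ) : ℝ :=
  if z ≤ 1 / 2 then 0 else 4 * ((2 * z - 1)⁻¹) ^ 3 * Real.exp (1 - ((2 * z - 1)⁻¹) ^ 2)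

/-- second derivative of `ψ` -/
def psiDD (z : ℝ) : ℝ :=
  if z ≤ 1 / 2 then 0 else
    (16 * ((2 * z - 1)⁻¹) ^ 6 - 24 * ((2 * z - 1)⁻¹) ^ 4) * Real.exp (1 - ((2 * z - 1)⁻¹) ^ 2)

lemma psi_of_le {z : ℝ} (h : z ≤ 1 / 2) : ψfun z = 0 := by simp only [ψfun, if_pos h]
lemma psiD_of_le {z : ℝ} (h : z ≤ 1 / 2) : psiD z = 0 := by simp only [psiD, if_pos h]
lemma psiDD_of_le {z : ℝ} (h : z ≤ 1 / 2) : psiDD z = 0 := by simp only [psiDD, if_pos h]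

lemma psi_of_gt {z : ℝ} (h : 1 / 2 < z) :
    ψfun z = Real.exp (1 - ((2 * z - 1)⁻¹) ^ 2) := by
  simp only [ψfun, if_neg (not_le.mpr h)]
  congr 2
  rw [inv_pow, one_div]
lemma psiD_of_gt {z : ℝ} (h : 1 / 2 < z) :
    psiD z = 4 * ((2 * z - 1)⁻¹) ^ 3 * Real.exp (1 - ((2 * z - 1)⁻¹) ^ 2) := by
  simp only [psiD, if_neg (not_le.mpr h)]
lemma psiDD_of_gt {z : ℝ} (h : 1 / 2 < z) :
    psiDD z = (16 * ((2 * z - 1)⁻¹) ^ 6 - 24 * ((2 * z - 1)⁻¹) ^ 4)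
      * Real.exp (1 - ((2 * z - 1)⁻¹) ^ 2) := by
  simp only [psiDD, if_neg (not_le.mpr h)]

lemma inv_pos_of_gt {z : ℝ} (h : 1 / 2 < z) : 0 < (2 * z - 1)⁻¹ := by
  apply inv_pos.mpr; linarith

lemma hasDerivAt_u {z : ℝ} (h : 1 / 2 < z) :
    HasDerivAt (fun z : ℝ => (2 * z - 1)⁻¹) (-2 * ((2 * z - 1)⁻¹) ^ 2) z := by
  have h0 : (2 * z - 1) ≠ 0 := by linarith
  have h1 : HasDerivAt (fun z : ℝ => 2 * z - 1) 2 z := by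
    simpa using ((hasDerivAt_id z).const_mul 2).sub_const 1
  refine (h1.fun_inv h0).congr_deriv ?_
  rw [inv_pow, div_eq_mul_inv]

lemma hasDerivAt_e {z : ℝ} (h : 1 / 2 < z) :
    HasDerivAt (fun z : ℝ => Real.exp (1 - ((2 * z - 1)⁻¹) ^ 2))
      (4 * ((2 * z - 1)⁻¹) ^ 3 * Real.exp (1 - ((2 * z - 1)⁻¹) ^ 2)) z := by
  have h1 := (((hasDerivAt_u h).fun_pow 2).const_sub 1).exp
  refine h1.congr_deriv ?_
  push_cast
  ring

lemma flat_hasDerivAt (F : ℝ → ℝ) (C : ℝ)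
    (hF : ∀ z, |F z| ≤ C * (z - 1 / 2) ^ 2) : HasDerivAt F 0 (1 / 2) := by
  have h : F =O[nhds (1 / 2)] (fun z => ‖z - 1 / 2‖ ^ 2) := by
    apply Asymptotics.IsBigO.of_bound C
    refine Filter.Eventually.of_forall fun z => ?_
    have := hF z
    simpa using this
  have := h.hasFDerivAt (𝕜 := ℝ) (by norm_num)
  have h2 := this.hasDerivAt
  simpa using h2

lemma cube_le_exp (s : ℝ) (hs : 0 ≤ s) : s ^ 3 ≤ 27 * Real.exp (s - 3) := by
  have h := Real.add_one_le_exp (s / 3 - 1)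
  have h1 : s / 3 ≤ Real.exp (s / 3 - 1) := by linarith
  have h2 : (s / 3) ^ 3 ≤ Real.exp (s / 3 - 1) ^ 3 := pow_le_pow_left₀ (by positivity) h1 3
  rw [← Real.exp_nat_mul] at h2
  have : ((3 : ℕ) : ℝ) * (s / 3 - 1) = s - 3 := by push_cast; ring
  rw [this] at h2
  nlinarith

lemma psi_flat (z : ℝ) : |ψfun z| ≤ 4 * (z - 1 / 2) ^ 2 := by
  rcases le_or_gt z (1 / 2) with h | h
  · rw [psi_of_le h]; simp; positivity
  · rw [psi_of_gt h, abs_of_pos (Real.exp_pos _)]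
    have hu := inv_pos_of_gt h
    have hw : 0 < 2 * z - 1 := by linarith
    set w := 2 * z - 1 with hwd
    have hz : 4 * (z - 1 / 2) ^ 2 = w ^ 2 := by rw [hwd]; ring
    rw [hz]
    have h1 := Real.add_one_le_exp (w⁻¹ ^ 2 - 1)
    have h2 : w⁻¹ ^ 2 ≤ Real.exp (w⁻¹ ^ 2 - 1) := by linarith
    have h3 : Real.exp (1 - w⁻¹ ^ 2) = (Real.exp (w⁻¹ ^ 2 - 1))⁻¹ := by
      rw [← Real.exp_neg]; congr 1; ring
    rw [h3]
    have := inv_anti₀ (by positivity) h2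
    simpa using this

lemma psiD_flat (z : ℝ) : |psiD z| ≤ 10000 * (z - 1 / 2) ^ 2 := by
  rcases le_or_gt z (1 / 2) with h | h
  · rw [psiD_of_le h]; simp; positivity
  · have hu := inv_pos_of_gt h
    have hw : 0 < 2 * z - 1 := by linarith
    rw [psiD_of_gt h, abs_of_pos (by positivity)]
    set w := 2 * z - 1 with hwd
    have hz : 10000 * (z - 1 / 2) ^ 2 = 2500 * w ^ 2 := by rw [hwd]; ring
    rw [hz]
    set u := w⁻¹ with hud
    have hwu : w = u⁻¹ := by simp [hud]
    rw [hwu]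
    have h1 := cube_le_exp (u ^ 2) (by positivity)
    have h2 : Real.exp (u ^ 2 - 3) ≤ Real.exp (u ^ 2 - 1) := Real.exp_le_exp.mpr (by linarith)
    have h3 : 1 ≤ 3 * Real.exp (u ^ 2 - 1) := by
      have : Real.exp (-1) ≤ Real.exp (u ^ 2 - 1) := Real.exp_le_exp.mpr (by nlinarith)
      have h4 : 1 / 3 ≤ Real.exp (-1) := by
        rw [Real.exp_neg, one_div]
        exact inv_anti₀ (Real.exp_pos _) Real.exp_one_lt_three.le
      linarith
    have h5 : u ^ 5 ≤ 1 + u ^ 6 := by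
      rcases le_or_gt u 1 with h | h
      · have := pow_le_one₀ (n := 5) hu.le h
        have : 0 ≤ u ^ 6 := by positivity
        linarith
      · have := pow_le_pow_right₀ h.le (show 5 ≤ 6 by norm_num)
        linarith
    have h6 : u ^ 5 ≤ 100 * Real.exp (u ^ 2 - 1) := by nlinarith [Real.exp_pos (u ^ 2 - 1)]
    have h7 : Real.exp (1 - u ^ 2) = (Real.exp (u ^ 2 - 1))⁻¹ := by
      rw [← Real.exp_neg]; congr 1; ring
    rw [h7]
    have hE := Real.exp_pos (u ^ 2 - 1)
    set E := Real.exp (u ^ 2 - 1)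
    rw [← div_eq_mul_inv, div_le_iff₀ hE]
    have : 2500 * u⁻¹ ^ 2 * E = 2500 * E / u ^ 2 := by field_simp
    rw [this, le_div_iff₀ (by positivity)]
    nlinarith

lemma psi_hasDerivAt (z : ℝ) : HasDerivAt ψfun (psiD z) z := by
  rcases lt_trichotomy z (1 / 2) with h | h | h
  · rw [psiD_of_le h.le]
    apply (hasDerivAt_const z (0 : ℝ)).congr_of_eventuallyEq
    filter_upwards [Iio_mem_nhds h] with y hy
    exact psi_of_le (le_of_lt hy)
  · rw [psiD_of_le h.le, h]
    exact flat_hasDerivAt _ _ psi_flat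
  · rw [psiD_of_gt h]
    apply (hasDerivAt_e h).congr_of_eventuallyEq
    filter_upwards [Ioi_mem_nhds h] with y hy
    exact psi_of_gt hy

lemma psiD_hasDerivAt (z : ℝ) : HasDerivAt psiD (psiDD z) z := by
  rcases lt_trichotomy z (1 / 2) with h | h | h
  · rw [psiDD_of_le h.le]
    apply (hasDerivAt_const z (0 : ℝ)).congr_of_eventuallyEq
    filter_upwards [Iio_mem_nhds h] with y hy
    exact psiD_of_le (le_of_lt hy)
  · rw [psiDD_of_le h.le, h]
    exact flat_hasDerivAt _ _ psiD_flat
  · rw [psiDD_of_gt h]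
    have h1 := (((hasDerivAt_u h).fun_pow 3).const_mul 4).mul (hasDerivAt_e h)
    refine HasDerivAt.congr_of_eventuallyEq (h1.congr_deriv ?_) ?_
    · push_cast
      ring
    · filter_upwards [Ioi_mem_nhds h] with y hy
      simpa using psiD_of_gt hy

lemma psi_nonneg (z : ℝ) : 0 ≤ ψfun z := by
  rcases le_or_gt z (1 / 2) with h | h
  · rw [psi_of_le h]
  · rw [psi_of_gt h]; positivity

lemma psiD_nonneg (z : ℝ) : 0 ≤ psiD z := by
  rcases le_or_gt z (1 / 2) with h | h
  · rw [psiD_of_le h]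
  · have := inv_pos_of_gt h
    rw [psiD_of_gt h]; positivity

lemma psi_le (z : ℝ) : ψfun z ≤ 2.7183 := by
  rcases le_or_gt z (1 / 2) with h | h
  · rw [psi_of_le h]; norm_num
  · rw [psi_of_gt h]
    have : Real.exp (1 - (2 * z - 1)⁻¹ ^ 2) ≤ Real.exp 1 :=
      Real.exp_le_exp.mpr (by nlinarith [sq_nonneg (2 * z - 1)⁻¹])
    have := Real.exp_one_lt_d9
    linarith

lemma psi_one : ψfun 1 = 1 := by
  rw [psi_of_gt (by norm_num)]; norm_num

lemma psi_ge_one {z : ℝ} (hz : 1 ≤ z) : 1 ≤ ψfun z := by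
  rw [psi_of_gt (by linarith)]
  apply Real.one_le_exp
  have : (2 * z - 1)⁻¹ ≤ 1 := inv_le_one_of_one_le₀ (by linarith)
  have h0 := inv_pos_of_gt (z := z) (by linarith)
  nlinarith

lemma psiD_le (z : ℝ) : psiD z ≤ 4.458 := by
  rcases le_or_gt z (1 / 2) with h | h
  · rw [psiD_of_le h]; norm_num
  · rw [psiD_of_gt h]
    have hu := inv_pos_of_gt h
    set u := (2 * z - 1)⁻¹
    apply le_of_sq_le_sq _ (by norm_num)
    have h1 := Real.add_one_le_exp (2 * u ^ 2 / 3 - 1)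
    have h2 : (2 * u ^ 2 / 3) ^ 3 ≤ Real.exp (2 * u ^ 2 / 3 - 1) ^ 3 :=
      pow_le_pow_left₀ (by positivity) (by linarith) 3
    have h3 : Real.exp (2 * u ^ 2 / 3 - 1) ^ 3 * Real.exp (1 - u ^ 2) ^ 2 * Real.exp 1 = 1 := by
      rw [← Real.exp_nat_mul, ← Real.exp_nat_mul, ← Real.exp_add, ← Real.exp_add]
      rw [Real.exp_eq_one_iff]
      push_cast; ring
    have hE := Real.exp_one_gt_d9
    have hX : (2 * u ^ 2 / 3) ^ 3 * Real.exp (1 - u ^ 2) ^ 2 * Real.exp 1 ≤ 1 := by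
      exact le_trans (by gcongr) h3.le
    set a := Real.exp (1 - u ^ 2)
    have e1 : (4 * u ^ 3 * a) ^ 2 = 54 * ((2 * u ^ 2 / 3) ^ 3 * a ^ 2) := by ring
    rw [e1]
    have hp : 0 ≤ (2 * u ^ 2 / 3) ^ 3 * a ^ 2 := by positivity
    set P := (2 * u ^ 2 / 3) ^ 3 * a ^ 2
    nlinarith

lemma exp_27 : (14.84 : ℝ) ≤ Real.exp 2.7 := by
  have h : Real.exp 2.7 = Real.exp 1 ^ 2 * Real.exp 0.7 := by
    rw [← Real.exp_nat_mul, ← Real.exp_add]; norm_num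
  have h1 := Real.sum_le_exp_of_nonneg (x := 0.7) (by norm_num) 5
  simp [Finset.sum_range_succ, Nat.factorial] at h1
  have h2 : (2.01 : ℝ) ≤ Real.exp 0.7 := by norm_num at h1 ⊢; linarith
  have h3 : (7.389 : ℝ) ≤ Real.exp 1 ^ 2 := by nlinarith [Real.exp_one_gt_d9]
  rw [h]
  nlinarith

lemma psiDD_key (s : ℝ) (hs : 0 ≤ s) :
    |(16 * s ^ 3 - 24 * s ^ 2) * Real.exp (1 - s)| ≤ 32.5 := by
  have hE := Real.exp_one_lt_d9
  rw [abs_le]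
  constructor
  · have h1 : Real.exp (1 - s) ≤ Real.exp 1 := Real.exp_le_exp.mpr (by linarith)
    have h2 : -8 ≤ 16 * s ^ 3 - 24 * s ^ 2 := by
      nlinarith [mul_nonneg hs (sq_nonneg (s - 1)), sq_nonneg (s - 1)]
    have h3 := Real.exp_pos (1 - s)
    nlinarith
  · rcases le_or_gt s (3 / 2) with h | h
    · have : 16 * s ^ 3 - 24 * s ^ 2 ≤ 0 := by nlinarith [sq_nonneg s]
      nlinarith [Real.exp_pos (1 - s)]
    · have h1 := Real.add_one_le_exp (s / (15 / 4) - 1)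
      have h2 := Real.add_one_le_exp ((2 * s - 3) / (30 / 7) - 1)
      have h3 : (s / (15 / 4)) ^ 2 * ((2 * s - 3) / (30 / 7)) ≤
          Real.exp (s / (15 / 4) - 1) ^ 2 * Real.exp ((2 * s - 3) / (30 / 7) - 1) := by
        have : 0 ≤ (2 * s - 3) / (30 / 7) := by apply div_nonneg <;> linarith
        gcongr <;> linarith
      have h4 : Real.exp (s / (15 / 4) - 1) ^ 2 * Real.exp ((2 * s - 3) / (30 / 7) - 1)
          * Real.exp (1 - s) * Real.exp 2.7 = 1 := by
        rw [← Real.exp_nat_mul, ← Real.exp_add, ← Real.exp_add, ← Real.exp_add,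
          Real.exp_eq_one_iff]
        push_cast; ring
      have h5 : (s / (15 / 4)) ^ 2 * ((2 * s - 3) / (30 / 7)) * Real.exp (1 - s)
          * Real.exp 2.7 ≤ 1 := by
        exact le_trans (by gcongr) h4.le
      set a := Real.exp (1 - s)
      have e1 : (16 * s ^ 3 - 24 * s ^ 2) * a =
        (8 * (15 / 4) ^ 2 * (30 / 7)) * ((s / (15 / 4)) ^ 2 * ((2 * s - 3) / (30 / 7)) * a) := by
        ring
      rw [e1]
      have ha : 0 < a := Real.exp_pos _
      have hp : 0 ≤ (s / (15 / 4)) ^ 2 * ((2 * s - 3) / (30 / 7)) * a := by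
        have : 0 ≤ (2 * s - 3) / (30 / 7) := by apply div_nonneg <;> linarith
        positivity
      have := exp_27
      set P := (s / (15 / 4)) ^ 2 * ((2 * s - 3) / (30 / 7)) * a
      have hP : P * 14.84 ≤ 1 := le_trans (by gcongr) h5
      norm_num at hP ⊢
      linarith

lemma psiDD_abs_le (z : ℝ) : |psiDD z| ≤ 32.5 := by
  rcases le_or_gt z (1 / 2) with h | h
  · rw [psiDD_of_le h]; norm_num
  · rw [psiDD_of_gt h]
    have := psiDD_key ((2 * z - 1)⁻¹ ^ 2) (by positivity)
    convert this using 3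
    ring

/-! ### Calculus facts about `φ` -/

/-- derivative of `φ` -/
def phiD (z : ℝ) : ℝ := Real.sqrt (Real.exp 1) * Real.exp (-z ^ 2 / 2)

lemma gauss_eq : (fun t : ℝ => Real.exp (-t ^ 2 / 2)) = fun t => Real.exp (-(1 / 2) * t ^ 2) := by
  ext t; congr 1; ring

lemma gauss_integrable : Integrable (fun t : ℝ => Real.exp (-t ^ 2 / 2)) := by
  rw [gauss_eq]; exact integrable_exp_neg_mul_sq (by norm_num)

lemma phi_hasDerivAt (z : ℝ) : HasDerivAt φfun (phiD z) z := by
  have hc : Continuous (fun t : ℝ => Real.exp (-t ^ 2 / 2)) := by fun_prop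
  have h1 : HasDerivAt (fun z => ∫ t in (0 : ℝ)..z, Real.exp (-t ^ 2 / 2))
      (Real.exp (-z ^ 2 / 2)) z :=
    intervalIntegral.integral_hasDerivAt_right (hc.intervalIntegrable _ _)
      (hc.stronglyMeasurableAtFilter _ _) hc.continuousAt
  have h2 := (h1.const_add (∫ t in Set.Iic (0 : ℝ), Real.exp (-t ^ 2 / 2))).const_mul
    (Real.sqrt (Real.exp 1))
  refine h2.congr_of_eventuallyEq (Filter.Eventually.of_forall fun y => ?_)
  simp only [φfun]
  congr 1
  have := intervalIntegral.integral_Iic_sub_Iic (a := 0) (b := y)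
    (gauss_integrable.integrableOn) (gauss_integrable.integrableOn)
  linarith

lemma sqrt_exp_one_le : Real.sqrt (Real.exp 1) ≤ 1.649 := by
  apply Real.sqrt_le_iff.mpr
  have := Real.exp_one_lt_d9
  constructor
  · norm_num
  · norm_num at this ⊢; linarith

lemma phi_nonneg (z : ℝ) : 0 ≤ φfun z := by
  unfold φfun
  apply mul_nonneg (Real.sqrt_nonneg _)
  apply integral_nonneg
  intro t; positivity

lemma phi_le (z : ℝ) : φfun z ≤ 4.133 := by
  have h1 : ∫ t in Set.Iic z, Real.exp (-t ^ 2 / 2) ≤ ∫ t, Real.exp (-t ^ 2 / 2) :=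
    setIntegral_le_integral gauss_integrable
      (Filter.Eventually.of_forall fun t => (Real.exp_pos _).le)
  have h2 : ∫ t : ℝ, Real.exp (-t ^ 2 / 2) = Real.sqrt (2 * Real.pi) := by
    rw [gauss_eq, integral_gaussian]; congr 1; field_simp
  rw [h2] at h1
  have h3 : φfun z ≤ Real.sqrt (Real.exp 1) * Real.sqrt (2 * Real.pi) := by
    unfold φfun; gcongr
  refine h3.trans ?_
  rw [← Real.sqrt_mul (Real.exp_pos 1).le]
  apply Real.sqrt_le_iff.mpr
  refine ⟨by norm_num, ?_⟩
  have := Real.exp_one_lt_d9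
  have := Real.pi_lt_d4
  have := Real.pi_pos
  have h4 : Real.exp 1 * (2 * Real.pi) ≤ 2.7182818286 * (2 * 3.1416) := by gcongr
  norm_num at h4 ⊢
  linarith

lemma phiD_nonneg (z : ℝ) : 0 ≤ phiD z := by unfold phiD; positivity

lemma phiD_neg (z : ℝ) : phiD (-z) = phiD z := by simp [phiD]

lemma phiD_le (z : ℝ) : phiD z ≤ 1.649 := by
  have : Real.exp (-z ^ 2 / 2) ≤ 1 := Real.exp_le_one_iff.mpr (by nlinarith [sq_nonneg z])
  unfold phiD
  have h := sqrt_exp_one_le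
  nlinarith [Real.sqrt_nonneg (Real.exp 1)]

lemma phiD_eq (z : ℝ) : phiD z = Real.exp ((1 - z ^ 2) / 2) := by
  unfold phiD
  rw [Real.sqrt_eq_rpow, ← Real.exp_mul, ← Real.exp_add]
  congr 1; ring

lemma phiD_ge_one {z : ℝ} (h : |z| ≤ 1) : 1 ≤ phiD z := by
  rw [phiD_eq]
  apply Real.one_le_exp
  have : z ^ 2 ≤ 1 := (sq_le_one_iff_abs_le_one z).mpr h
  linarith

lemma phiD_hasDerivAt (z : ℝ) : HasDerivAt phiD (-z * phiD z) z := by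
  have h1 : HasDerivAt (fun z : ℝ => Real.exp ((1 - z ^ 2) / 2)) (-z * phiD z) z := by
    have := ((((hasDerivAt_id' z).fun_pow 2).const_sub 1).div_const 2).exp
    refine this.congr_deriv ?_
    rw [phiD_eq]; push_cast; ring
  have : phiD = fun z : ℝ => Real.exp ((1 - z ^ 2) / 2) := funext phiD_eq
  rw [this] at h1 ⊢
  exact h1

lemma phiDD_abs_le (z : ℝ) : |-z * phiD z| ≤ 1 := by
  rw [← sq_le_one_iff_abs_le_one, phiD_eq, mul_pow, ← Real.exp_nat_mul]
  have h := Real.add_one_le_exp (z ^ 2 - 1)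
  have h1 : Real.exp (z ^ 2 - 1) * Real.exp (((2 : ℕ) : ℝ) * ((1 - z ^ 2) / 2)) = 1 := by
    rw [← Real.exp_add, Real.exp_eq_one_iff]; push_cast; ring
  have : (-z) ^ 2 ≤ Real.exp (z ^ 2 - 1) := by nlinarith
  exact le_trans (by gcongr) h1.le

/-! ### The two-variable building block -/

/-- `∂/∂s` of `ψ(-s)φ(-t) - ψ(s)φ(t)` -/
def partA (s t : ℝ) : ℝ := -psiD (-s) * φfun (-t) - psiD s * φfun t

/-- `∂/∂t` of `ψ(-s)φ(-t) - ψ(s)φ(t)` -/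
def partB (s t : ℝ) : ℝ := -(ψfun (-s) + ψfun s) * phiD t

lemma lip_of_deriv {F F' : ℝ → ℝ} {C : ℝ} (h : ∀ z, HasDerivAt F (F' z) z)
    (hC : ∀ z, |F' z| ≤ C) (a b : ℝ) : |F a - F b| ≤ C * |a - b| :=
  Convex.norm_image_sub_le_of_norm_hasDerivWithin_le (s := Set.univ)
    (fun z _ => (h z).hasDerivWithinAt) (fun z _ => hC z) convex_univ
    (Set.mem_univ b) (Set.mem_univ a)

lemma hasDerivAt_comp_neg {F : ℝ → ℝ} {c z : ℝ} (h : HasDerivAt F c (-z)) :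
    HasDerivAt (fun z => F (-z)) (-c) z := by
  have := h.comp z (hasDerivAt_neg z)
  simpa [Function.comp_def] using this

lemma combine_abs {p q r s P Q : ℝ} (hP : 0 ≤ P) (hr : |r| ≤ Q) (hs : |s| ≤ Q)
    (h : (p = 0 ∧ |q| ≤ P) ∨ (q = 0 ∧ |p| ≤ P)) : |p * r - q * s| ≤ P * Q := by
  rcases h with ⟨h0, h1⟩ | ⟨h0, h1⟩
  · subst h0
    rw [zero_mul, zero_sub, abs_neg, abs_mul]
    exact mul_le_mul h1 hs (abs_nonneg _) hP
  · subst h0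
    rw [zero_mul, sub_zero, abs_mul]
    exact mul_le_mul h1 hr (abs_nonneg _) hP

lemma phi_abs_le (z : ℝ) : |φfun z| ≤ 4.133 := by
  rw [abs_of_nonneg (phi_nonneg z)]; exact phi_le z
lemma phiD_abs_le (z : ℝ) : |phiD z| ≤ 1.649 := by
  rw [abs_of_nonneg (phiD_nonneg z)]; exact phiD_le z
lemma psiD_abs_le (z : ℝ) : |psiD z| ≤ 4.458 := by
  rw [abs_of_nonneg (psiD_nonneg z)]; exact psiD_le z
lemma psi_abs_le (z : ℝ) : |ψfun z| ≤ 2.7183 := by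
  rw [abs_of_nonneg (psi_nonneg z)]; exact psi_le z

lemma partA_lip_left (t a b : ℝ) : |partA a t - partA b t| ≤ (32.5 * 4.133) * |a - b| := by
  refine lip_of_deriv (F := fun s => partA s t)
    (F' := fun s => psiDD (-s) * φfun (-t) - psiDD s * φfun t) ?_ ?_ a b
  · intro s
    have h1 := ((hasDerivAt_comp_neg (psiD_hasDerivAt (-s))).neg.mul_const (φfun (-t))).sub
      ((psiD_hasDerivAt s).mul_const (φfun t))
    exact h1.congr_deriv (by simp)
  · intro s
    apply combine_abs (by norm_num) (phi_abs_le _) (phi_abs_le _)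
    rcases le_total 0 s with h | h
    · exact Or.inl ⟨psiDD_of_le (by linarith), psiDD_abs_le _⟩
    · exact Or.inr ⟨psiDD_of_le (by linarith), psiDD_abs_le _⟩

lemma partA_lip_right (s a b : ℝ) : |partA s a - partA s b| ≤ (4.458 * 1.649) * |a - b| := by
  refine lip_of_deriv (F := fun t => partA s t)
    (F' := fun t => psiD (-s) * phiD (-t) - psiD s * phiD t) ?_ ?_ a b
  · intro t
    have h1 := ((hasDerivAt_comp_neg (phi_hasDerivAt (-t))).const_mul (-psiD (-s))).sub
      ((phi_hasDerivAt t).const_mul (psiD s))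
    exact h1.congr_deriv (by simp)
  · intro t
    apply combine_abs (by norm_num) (phiD_abs_le _) (phiD_abs_le _)
    rcases le_total 0 s with h | h
    · exact Or.inl ⟨psiD_of_le (by linarith), psiD_abs_le _⟩
    · exact Or.inr ⟨psiD_of_le (by linarith), psiD_abs_le _⟩

lemma partB_lip_left (t a b : ℝ) : |partB a t - partB b t| ≤ (4.458 * 1.649) * |a - b| := by
  refine lip_of_deriv (F := fun s => partB s t)
    (F' := fun s => psiD (-s) * phiD t - psiD s * phiD t) ?_ ?_ a b
  · intro s
    have h1 := ((hasDerivAt_comp_neg (psi_hasDerivAt (-s))).add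
      (psi_hasDerivAt s)).neg.mul_const (phiD t)
    have h2 := h1.congr_deriv (g' := psiD (-s) * phiD t - psiD s * phiD t) (by ring)
    exact h2
  · intro s
    apply combine_abs (by norm_num) (phiD_abs_le _) (phiD_abs_le _)
    rcases le_total 0 s with h | h
    · exact Or.inl ⟨psiD_of_le (by linarith), psiD_abs_le _⟩
    · exact Or.inr ⟨psiD_of_le (by linarith), psiD_abs_le _⟩

lemma partB_lip_right (s a b : ℝ) : |partB s a - partB s b| ≤ (2.7183 * 1) * |a - b| := by
  refine lip_of_deriv (F := fun t => partB s t)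
    (F' := fun t => -(ψfun (-s) + ψfun s) * (-t * phiD t)) ?_ ?_ a b
  · intro t
    exact (phiD_hasDerivAt t).const_mul _
  · intro t
    have e : -(ψfun (-s) + ψfun s) * (-t * phiD t)
      = ψfun (-s) * -(-t * phiD t) - ψfun s * (-t * phiD t) := by ring
    rw [e]
    apply combine_abs (by norm_num) (by rw [abs_neg]; exact phiDD_abs_le _) (phiDD_abs_le _)
    rcases le_total 0 s with h | h
    · exact Or.inl ⟨psi_of_le (by linarith), psi_abs_le _⟩
    · exact Or.inr ⟨psi_of_le (by linarith), psi_abs_le _⟩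

lemma partA_nonpos (s t : ℝ) : partA s t ≤ 0 := by
  have := mul_nonneg (psiD_nonneg (-s)) (phi_nonneg (-t))
  have := mul_nonneg (psiD_nonneg s) (phi_nonneg t)
  unfold partA; linarith

lemma partB_le {s t : ℝ} (hs : 1 ≤ |s|) (ht : |t| ≤ 1) : partB s t ≤ -1 := by
  have h1 : 1 ≤ ψfun (-s) + ψfun s := by
    have := psi_nonneg s
    have := psi_nonneg (-s)
    rcases le_abs.mp hs with h | h
    · have := psi_ge_one h; linarith
    · have := psi_ge_one h; linarith
  have h2 := phiD_ge_one ht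
  unfold partB
  nlinarith

/-! ### The gradient of `h` -/

/-- coordinates shifted by one, with a leading `1` -/
def prevC {d : ℕ} (x : EuclideanSpace ℝ (Fin (d + 1))) : Fin (d + 1) → ℝ :=
  Fin.cons (α := fun _ => ℝ) 1 (fun j : Fin d => x j.castSucc)

/-- the contribution of the pair `(x_i, x_{i+1})` to the `i`-th partial derivative -/
def nextA {d : ℕ} (x : EuclideanSpace ℝ (Fin (d + 1))) : Fin (d + 1) → ℝ :=
  Fin.snoc (α := fun _ => ℝ) (fun j : Fin d => partA (x j.castSucc) (x j.succ)) 0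

/-- the gradient of `h` -/
def gradH {d : ℕ} (x : EuclideanSpace ℝ (Fin (d + 1))) : EuclideanSpace ℝ (Fin (d + 1)) :=
  WithLp.toLp 2 fun i => partB (prevC x i) (x i) + nextA x i

lemma gradH_apply {d : ℕ} (x : EuclideanSpace ℝ (Fin (d + 1))) (i : Fin (d + 1)) :
    gradH x i = partB (prevC x i) (x i) + nextA x i := rfl

lemma prevC_zero {d : ℕ} (x : EuclideanSpace ℝ (Fin (d + 1))) : prevC x 0 = 1 := rfl
lemma prevC_succ {d : ℕ} (x : EuclideanSpace ℝ (Fin (d + 1))) (j : Fin d) :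
    prevC x j.succ = x j.castSucc := rfl
lemma nextA_last {d : ℕ} (x : EuclideanSpace ℝ (Fin (d + 1))) : nextA x (Fin.last d) = 0 := by
  simp [nextA]
lemma nextA_castSucc {d : ℕ} (x : EuclideanSpace ℝ (Fin (d + 1))) (j : Fin d) :
    nextA x j.castSucc = partA (x j.castSucc) (x j.succ) := by
  simp [nextA]

lemma coord_hasFDerivAt {d : ℕ} (x : EuclideanSpace ℝ (Fin (d + 1))) (i : Fin (d + 1)) :
    HasFDerivAt (fun x : EuclideanSpace ℝ (Fin (d + 1)) => x i)
      (EuclideanSpace.proj (𝕜 := ℝ) i) x :=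
  ContinuousLinearMap.hasFDerivAt
    (EuclideanSpace.proj i : EuclideanSpace ℝ (Fin (d + 1)) →L[ℝ] ℝ)

lemma pair_hasFDerivAt {d : ℕ} (x : EuclideanSpace ℝ (Fin (d + 1))) (a b : Fin (d + 1)) :
    HasFDerivAt (fun x : EuclideanSpace ℝ (Fin (d + 1)) =>
        ψfun (-(x a)) * φfun (-(x b)) - ψfun (x a) * φfun (x b))
      (partA (x a) (x b) • EuclideanSpace.proj (𝕜 := ℝ) a
        + partB (x a) (x b) • EuclideanSpace.proj (𝕜 := ℝ) b) x := by
  have ha := coord_hasFDerivAt x a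
  have hb := coord_hasFDerivAt x b
  have h1 := (hasDerivAt_comp_neg (psi_hasDerivAt (-(x a)))).comp_hasFDerivAt x ha
  have h2 := (hasDerivAt_comp_neg (phi_hasDerivAt (-(x b)))).comp_hasFDerivAt x hb
  have h3 := (psi_hasDerivAt (x a)).comp_hasFDerivAt x ha
  have h4 := (phi_hasDerivAt (x b)).comp_hasFDerivAt x hb
  have h := (h1.mul h2).sub (h3.mul h4)
  refine h.congr_fderiv ?_
  ext v
  simp [partA, partB, phiD_neg]
  ring

lemma hardFun_hasGradientAt {d : ℕ} (x : EuclideanSpace ℝ (Fin (d + 1))) :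
    HasGradientAt hardFun (gradH x) x := by
  rw [hasGradientAt_iff_hasFDerivAt]
  have h0 := ((phi_hasDerivAt (x 0)).comp_hasFDerivAt x (coord_hasFDerivAt x 0)).const_mul
    (-(ψfun 1))
  have hs := HasFDerivAt.fun_sum (u := Finset.univ) (fun (j : Fin d) _ =>
    pair_hasFDerivAt x j.castSucc j.succ)
  refine (h0.add hs).congr_fderiv ?_
  ext v
  rw [InnerProductSpace.toDual_apply_apply]
  have e1 : inner ℝ (gradH x) v = ∑ i, partB (prevC x i) (x i) * v i + ∑ i, nextA x i * v i := by
    rw [PiLp.inner_apply, ← Finset.sum_add_distrib]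
    refine Finset.sum_congr rfl fun i _ => ?_
    rw [gradH_apply]
    simp
    ring
  rw [e1, Fin.sum_univ_succ, Fin.sum_univ_castSucc (fun i => nextA x i * v i)]
  simp only [prevC_zero, prevC_succ, nextA_last, nextA_castSucc]
  have e2 : ψfun (-1) = 0 := psi_of_le (by norm_num)
  simp [Finset.sum_add_distrib, partB, e2]
  ring

lemma sq_key (p q r : ℝ) {X : ℝ}
    (h : |X| ≤ 7.36 * p + 137.1 * q + 7.36 * r) :
    X ^ 2 ≤ 152 * (7.36 * p ^ 2 + 137.1 * q ^ 2 + 7.36 * r ^ 2) := by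
  have h1 : X ^ 2 ≤ (7.36 * p + 137.1 * q + 7.36 * r) ^ 2 := by
    rw [← sq_abs X]; exact pow_le_pow_left₀ (abs_nonneg _) h 2
  refine h1.trans ?_
  nlinarith [sq_nonneg (p - q), sq_nonneg (p - r), sq_nonneg (q - r), sq_nonneg p, sq_nonneg q,
    sq_nonneg r]

lemma gradH_lip {d : ℕ} (x y : EuclideanSpace ℝ (Fin (d + 1))) :
    ‖gradH x - gradH y‖ ≤ 152 * ‖x - y‖ := by
  apply le_of_sq_le_sq _ (by positivity)
  rw [mul_pow, EuclideanSpace.real_norm_sq_eq, EuclideanSpace.real_norm_sq_eq]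
  set N : Fin (d + 1) → ℝ :=
    Fin.snoc (α := fun _ => ℝ) (fun j : Fin d => |x j.succ - y j.succ|) 0 with hN
  have hcomp : ∀ i, ((gradH x - gradH y) i) ^ 2 ≤
      152 * (7.36 * |prevC x i - prevC y i| ^ 2 + 137.1 * |x i - y i| ^ 2 + 7.36 * N i ^ 2) := by
    intro i
    apply sq_key
    have hA : |nextA x i - nextA y i| ≤ (32.5 * 4.133) * |x i - y i| + (4.458 * 1.649) * N i := by
      refine Fin.lastCases ?_ (fun j => ?_) i
      · simp only [nextA_last, hN, Fin.snoc_last]; simp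
        positivity
      · simp only [nextA_castSucc, hN, Fin.snoc_castSucc]
        have h1 := partA_lip_left (x j.succ) (x j.castSucc) (y j.castSucc)
        have h2 := partA_lip_right (y j.castSucc) (x j.succ) (y j.succ)
        have := abs_sub_le (partA (x j.castSucc) (x j.succ)) (partA (y j.castSucc) (x j.succ))
          (partA (y j.castSucc) (y j.succ))
        linarith
    have hNn : 0 ≤ N i := by
      refine Fin.lastCases ?_ (fun j => ?_) i
      · simp [hN]
      · simp [hN]
    have h1 := partB_lip_left (x i) (prevC x i) (prevC y i)
    have h2 := partB_lip_right (prevC y i) (x i) (y i)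
    have h3 := abs_sub_le (partB (prevC x i) (x i)) (partB (prevC y i) (x i))
          (partB (prevC y i) (y i))
    have e : (gradH x - gradH y) i = (partB (prevC x i) (x i) - partB (prevC y i) (y i))
        + (nextA x i - nextA y i) := by
      rw [PiLp.sub_apply, gradH_apply, gradH_apply]; ring
    rw [e]
    have h4 := abs_add_le (partB (prevC x i) (x i) - partB (prevC y i) (y i))
      (nextA x i - nextA y i)
    have n1 := abs_nonneg (x i - y i)
    have n2 := abs_nonneg (prevC x i - prevC y i)
    norm_num at hA h1 h2 ⊢
    linarith
  have hP : ∑ i, |prevC x i - prevC y i| ^ 2 ≤ ∑ i, |x i - y i| ^ 2 := by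
    rw [Fin.sum_univ_succ, Fin.sum_univ_castSucc (fun i => |x i - y i| ^ 2)]
    simp only [prevC_zero, prevC_succ, sub_self, abs_zero]
    have := sq_nonneg |x (Fin.last d) - y (Fin.last d)|
    linarith
  have hNs : ∑ i, N i ^ 2 ≤ ∑ i, |x i - y i| ^ 2 := by
    rw [Fin.sum_univ_castSucc, Fin.sum_univ_succ (fun i => |x i - y i| ^ 2)]
    simp only [hN, Fin.snoc_castSucc, Fin.snoc_last]
    have := sq_nonneg |x 0 - y 0|
    linarith
  have hsum := Finset.sum_le_sum (s := Finset.univ) (fun i _ => hcomp i)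
  rw [← Finset.mul_sum, Finset.sum_add_distrib, Finset.sum_add_distrib, ← Finset.mul_sum,
    ← Finset.mul_sum, ← Finset.mul_sum] at hsum
  have e : ∑ i, ((x - y) i) ^ 2 = ∑ i, |x i - y i| ^ 2 := by
    refine Finset.sum_congr rfl fun i _ => ?_
    rw [sq_abs]; rfl
  rw [e]
  have hS : 0 ≤ ∑ i, |x i - y i| ^ 2 := Finset.sum_nonneg fun i _ => sq_nonneg _
  norm_num at hsum hP hNs hS ⊢
  linarith

lemma gradH_norm_ge {d : ℕ} (x : EuclideanSpace ℝ (Fin (d + 1))) (hx : x (Fin.last d) = 0) :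
    1 ≤ ‖gradH x‖ := by
  have hex : ∃ i, 1 ≤ |prevC x i| ∧ |x i| ≤ 1 := by
    by_contra hcon
    push Not at hcon
    have hall : ∀ i : Fin (d + 1), 1 < |x i| := by
      intro i
      induction i using Fin.induction with
      | zero => exact hcon 0 (by rw [prevC_zero]; simp)
      | succ j ih => exact hcon j.succ (by rw [prevC_succ]; exact ih.le)
    have := hall (Fin.last d)
    rw [hx] at this
    norm_num at this
  obtain ⟨i, h1, h2⟩ := hex
  have hB := partB_le h1 h2
  have hA : nextA x i ≤ 0 := by
    refine Fin.lastCases ?_ (fun j => ?_) i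
    · rw [nextA_last]
    · rw [nextA_castSucc]; exact partA_nonpos _ _
  have hg : gradH x i ≤ -1 := by rw [gradH_apply]; linarith
  have h3 : ‖gradH x i‖ ≤ ‖gradH x‖ := PiLp.norm_apply_le (gradH x) i
  rw [Real.norm_eq_abs, abs_of_nonpos (by linarith)] at h3
  linarith

lemma hardFun_gap {d : ℕ} (x : EuclideanSpace ℝ (Fin (d + 1))) :
    hardFun (0 : EuclideanSpace ℝ (Fin (d + 1))) - hardFun x ≤ 12 * ((d : ℝ) + 1) := by
  have h0 : hardFun (0 : EuclideanSpace ℝ (Fin (d + 1))) ≤ 0 := by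
    have e : ψfun 0 = 0 := psi_of_le (by norm_num)
    simp [hardFun, e, psi_one]
    exact phi_nonneg 0
  have h1 : -φfun (x 0) - ∑ j : Fin d, (12 : ℝ) ≤ hardFun x := by
    unfold hardFun
    rw [psi_one, sub_eq_add_neg, ← Finset.sum_neg_distrib]
    have : ∑ j : Fin d, (-12 : ℝ) ≤ ∑ j : Fin d,
        (ψfun (-(x j.castSucc)) * φfun (-(x j.succ)) - ψfun (x j.castSucc) * φfun (x j.succ)) := by
      refine Finset.sum_le_sum fun j _ => ?_
      have a1 := mul_nonneg (psi_nonneg (-(x j.castSucc))) (phi_nonneg (-(x j.succ)))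
      have a2 : ψfun (x j.castSucc) * φfun (x j.succ) ≤ 2.7183 * 4.133 :=
        mul_le_mul (psi_le _) (phi_le _) (phi_nonneg _) (by norm_num)
      norm_num at a2
      linarith
    linarith
  have h2 := phi_le (x 0)
  simp at h1
  norm_num at h2
  linarith

/-- the scaled hard function: with `f(x) = (Lλ²/152)·h(x/λ)` on
`ℝ^{d+1}`, (1) `∇f` is `L`-Lipschitz, (2) `f(0) - inf f ≤ 12·Lλ²(d+1)/152`, and
(3) `‖∇f(x)‖ ≥ Lλ/152` whenever the last coordinate of `x` vanishes. -/
theorem scaled_hardFun_properties (d : ℕ) (L lam : ℝ) (hL : 0 < L) (hlam : 0 < lam)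
    (f : EuclideanSpace ℝ (Fin (d + 1)) → ℝ)
    (hf : ∀ x, f x = (L * lam ^ 2 / 152) * hardFun (lam⁻¹ • x)) :
    (∀ x y : EuclideanSpace ℝ (Fin (d + 1)),
      ‖gradient f x - gradient f y‖ ≤ L * ‖x - y‖) ∧
    (∀ x : EuclideanSpace ℝ (Fin (d + 1)),
      f 0 - f x ≤ 12 * L * lam ^ 2 * ((d : ℝ) + 1) / 152) ∧
    (∀ x : EuclideanSpace ℝ (Fin (d + 1)), x (Fin.last d) = 0 →
      L * lam / 152 ≤ ‖gradient f x‖) := by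
  have hgrad : ∀ x, gradient f x = (L * lam / 152) • gradH (lam⁻¹ • x) := by
    intro x
    apply HasGradientAt.gradient
    rw [hasGradientAt_iff_hasFDerivAt]
    have hin : HasFDerivAt (fun x : EuclideanSpace ℝ (Fin (d + 1)) => lam⁻¹ • x)
        (lam⁻¹ • ContinuousLinearMap.id ℝ (EuclideanSpace ℝ (Fin (d + 1)))) x :=
      (hasFDerivAt_id x).const_smul lam⁻¹
    have h1 := (hasGradientAt_iff_hasFDerivAt.mp
      (hardFun_hasGradientAt (lam⁻¹ • x))).comp x hin
    have h2 := h1.const_mul (L * lam ^ 2 / 152)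
    have hfe : f = fun x => (L * lam ^ 2 / 152) * hardFun (lam⁻¹ • x) := funext hf
    rw [hfe]
    refine h2.congr_fderiv ?_
    ext v
    simp
    field_simp
  have hc : 0 < L * lam / 152 := by positivity
  refine ⟨fun x y => ?_, fun x => ?_, fun x hx => ?_⟩
  · rw [hgrad, hgrad, ← smul_sub, norm_smul, Real.norm_of_nonneg hc.le]
    have h := gradH_lip (lam⁻¹ • x) (lam⁻¹ • y)
    rw [← smul_sub, norm_smul, Real.norm_of_nonneg (inv_pos.mpr hlam).le] at h
    calc L * lam / 152 * ‖gradH (lam⁻¹ • x) - gradH (lam⁻¹ • y)‖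
        ≤ L * lam / 152 * (152 * (lam⁻¹ * ‖x - y‖)) := by gcongr
      _ = L * ‖x - y‖ := by field_simp
  · rw [hf, hf, smul_zero, ← mul_sub]
    have h := hardFun_gap (lam⁻¹ • x)
    calc L * lam ^ 2 / 152 * (hardFun 0 - hardFun (lam⁻¹ • x))
        ≤ L * lam ^ 2 / 152 * (12 * ((d : ℝ) + 1)) := by gcongr
      _ = 12 * L * lam ^ 2 * ((d : ℝ) + 1) / 152 := by ring
  · rw [hgrad, norm_smul, Real.norm_of_nonneg hc.le]
    have h := gradH_norm_ge (lam⁻¹ • x) (by simp [hx])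
    nlinarith

end
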